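/- Let ψ₁, ψ₂ : [0,∞) → ℝ be continuous functions which are viscosity solutions of (E) on (0,∞). Then there is a constant C ∈ ℝ such that ψ₁(r) = ψ₂(r) + C for all r ∈ [0, n-1]. -/

import Mathlib

open Set Filter Topology

/-- `ψ` is a viscosity subsolution of (E): `-((n-1)/r)·ψ'(r) - |ψ'(r)| = h(r)`
on an open set `I ⊆ (0,∞)`: for every test function `φ` differentiable on `(0,∞)`
and every `r₀ ∈ I` at which `ψ - φ` attains a local maximum, the subsolution
inequality holds. -/
def ViscSubsolE (n : ℕ) (h : ℝ → ℝ) (I : Set ℝ) (ψ : ℝ → ℝ) : Prop :=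
  ∀ φ : ℝ → ℝ, DifferentiableOn ℝ φ (Set.Ioi 0) →
    ∀ r₀ ∈ I, IsLocalMax (fun r => ψ r - φ r) r₀ →
      -(((n : ℝ) - 1) / r₀) * deriv φ r₀ - |deriv φ r₀| ≤ h r₀

/-- Viscosity supersolution of (E) on an open set `I ⊆ (0,∞)`. -/
def ViscSupersolE (n : ℕ) (h : ℝ → ℝ) (I : Set ℝ) (ψ : ℝ → ℝ) : Prop :=
  ∀ φ : ℝ → ℝ, DifferentiableOn ℝ φ (Set.Ioi 0) →
    ∀ r₀ ∈ I, IsLocalMin (fun r => ψ r - φ r) r₀ →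
      -(((n : ℝ) - 1) / r₀) * deriv φ r₀ - |deriv φ r₀| ≥ h r₀

/-- Viscosity solution of (E): both a subsolution and a supersolution. -/
def ViscSolE (n : ℕ) (h : ℝ → ℝ) (I : Set ℝ) (ψ : ℝ → ℝ) : Prop :=
  ViscSubsolE n h I ψ ∧ ViscSupersolE n h I ψ

/-!
For `0 < r < n - 1` the map `p ↦ -((n - 1) / r) * p - |p|` is a strictly decreasing bijection of
`ℝ`, so (E) determines the slope: it is equivalent to `ψ' = g` in the viscosity sense, where `g` is
an explicit continuous function of `r` and `h r`. A continuous viscosity solution of `ψ' = g` is a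
classical primitive of `g`, so two solutions differ by a constant on `(0, n - 1)`, and by continuity
on `[0, n - 1]`.
-/

/-- The inequality `g ≤ u'` on `s` in the viscosity sense, tested from above by globally
differentiable functions. The reverse inequality `u' ≤ g` is expressed by applying this to `-u` and
`-g`. -/
def HasViscDerivGE (u g : ℝ → ℝ) (s : Set ℝ) : Prop :=
  ∀ φ : ℝ → ℝ, Differentiable ℝ φ → ∀ r ∈ s, IsLocalMax (fun x => u x - φ x) r → g r ≤ deriv φ r

lemma exists_deriv_neg_and_lt_sub_and_sub_lt {a z ε : ℝ} (haz : a < z) (M : ℝ)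
    (hε : 0 < ε) :
    ∃ φ : ℝ → ℝ, Differentiable ℝ φ ∧ (∀ r, deriv φ r < 0) ∧ M < φ a - φ z ∧
      ∀ r, φ z - φ r < ε := by
  set A : ℝ := |M| + 1
  have : 0 < A := by positivity
  have decay : Tendsto (fun k : ℝ => A * Real.exp (-(k * (z - a)))) atTop (𝓝 0) := by
    simpa only [mul_zero, Function.comp_def, id] using
      (Real.tendsto_exp_neg_atTop_nhds_zero.comp
        (tendsto_id.atTop_mul_const (sub_pos.2 haz))).const_mul A
  obtain ⟨k, hk, hk_one, hk_eps⟩ := ((eventually_gt_atTop (0 : ℝ)).and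
    ((decay.eventually_lt_const one_pos).and (decay.eventually_lt_const hε))).exists
  have hasDeriv (r : ℝ) : HasDerivAt (fun x => A * Real.exp (-(k * (x - a))))
      (A * (Real.exp (-(k * (r - a))) * (-(k * 1)))) r :=
    ((((hasDerivAt_id r).sub_const a).const_mul k).neg.exp).const_mul A
  refine ⟨fun x => A * Real.exp (-(k * (x - a))), fun r => (hasDeriv r).differentiableAt,
    fun r => ?_, ?_, fun r => ?_⟩
  · have : 0 < A * (Real.exp (-(k * (r - a))) * (k * 1)) := by positivity
    rw [(hasDeriv r).deriv]
    linarith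
  · simp only [sub_self, mul_zero, neg_zero, Real.exp_zero, mul_one]
    linarith [le_abs_self M]
  · have : 0 < A * Real.exp (-(k * (r - a))) := by positivity
    linarith

namespace HasViscDerivGE

variable {u g : ℝ → ℝ} {s : Set ℝ} {a b : ℝ}

lemma sub_differentiable {G : ℝ → ℝ} (hu : HasViscDerivGE u g s) (hG : Differentiable ℝ G) :
    HasViscDerivGE (fun x => u x - G x) (fun x => g x - deriv G x) s := by
  intro φ hφ r hr hmax
  have := hu (fun x => G x + φ x) (hG.add hφ) r hr (by simpa only [sub_sub] using hmax)
  rw [deriv_fun_add (hG r) (hφ r)] at this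
  linarith

lemma le_of_nonneg (hu : HasViscDerivGE u g (Ioo a b)) (hg : ∀ r ∈ Ioo a b, 0 ≤ g r)
    (hab : a ≤ b) (hcont : ContinuousOn u (Icc a b)) : u a ≤ u b := by
  obtain rfl | hab := hab.eq_or_lt
  · rfl
  by_contra! hlt
  obtain ⟨z, hz, hzb⟩ : ∃ z ∈ Ioo a b, u b < u z := by
    have near_left : ∀ᶠ z in 𝓝[Ioo a b] a, u b < u z :=
      ((hcont a (left_mem_Icc.2 hab.le)).mono Ioo_subset_Icc_self).eventually_const_lt hlt
    rw [nhdsWithin_Ioo_eq_nhdsGT hab] at near_left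
    exact (Eventually.and (Ioo_mem_nhdsGT hab) near_left).exists
  -- Subtracting `φ` makes both endpoints lose to `z`, so the maximum is interior.
  obtain ⟨φ, hφ, deriv_neg, drop_left, drop_right⟩ :=
    exists_deriv_neg_and_lt_sub_and_sub_lt hz.1 (u a - u z) (sub_pos.2 hzb)
  obtain ⟨r, hr, hmax⟩ := isCompact_Icc.exists_isMaxOn (nonempty_Icc.2 hab.le)
    (hcont.sub hφ.continuous.continuousOn)
  have hzr : u z - φ z ≤ u r - φ r := hmax (Ioo_subset_Icc_self hz)
  have hra : a ≠ r := by
    rintro rfl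
    linarith
  have hrb : r ≠ b := by
    rintro rfl
    linarith [drop_right r]
  have hr' : r ∈ Ioo a b := ⟨hr.1.lt_of_ne hra, hr.2.lt_of_ne hrb⟩
  have := hu φ hφ r hr' (hmax.isLocalMax (Icc_mem_nhds hr'.1 hr'.2))
  linarith [hg r hr', deriv_neg r]

lemma integral_le_sub (hu : HasViscDerivGE u g (Ioo a b)) (hab : a ≤ b)
    (hcont : ContinuousOn u (Icc a b)) (hg : ContinuousOn g (Icc a b)) :
    ∫ x in a..b, g x ≤ u b - u a := by
  -- Test functions are differentiable on all of `ℝ`, so `g` is extended before being integrated.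
  set e : ℝ → ℝ := IccExtend hab ((Icc a b).domRestrict g)
  have he : Continuous e := hg.domRestrict.Icc_extend'
  have e_eq : EqOn e g (Icc a b) := fun x hx => IccExtend_of_mem _ _ hx
  have hasDeriv (r : ℝ) : HasDerivAt (fun x => ∫ t in a..x, e t) (e r) r :=
    (he.integral_hasStrictDerivAt a r).hasDerivAt
  have hG : Differentiable ℝ (fun x => ∫ t in a..x, e t) := fun r => (hasDeriv r).differentiableAt
  have key := (hu.sub_differentiable hG).le_of_nonneg
    (fun r hr => by rw [(hasDeriv r).deriv, e_eq (Ioo_subset_Icc_self hr), sub_self])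
    hab (hcont.sub hG.continuous.continuousOn)
  have integral_eq : ∫ x in a..b, e x = ∫ x in a..b, g x :=
    intervalIntegral.integral_congr (by rwa [uIcc_of_le hab])
  rw [intervalIntegral.integral_same, integral_eq] at key
  linarith

end HasViscDerivGE

/-- The left-hand side of (E) at radius `r` and slope `p`, with the real number `m` in place of
`n - 1`. -/
noncomputable def radialHamiltonian (m r p : ℝ) : ℝ :=
  -(m / r) * p - |p|

/-- The inverse of the bijection `radialHamiltonian m r`, for `0 < r < m`. It equals
`-r * s / (m + r)` for `s ≤ 0` and `-r * s / (m - r)` for `0 ≤ s`. -/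
noncomputable def radialSlope (m r s : ℝ) : ℝ :=
  -(r * (m * s + |s| * r)) / (m ^ 2 - r ^ 2)

section Hamiltonian

variable {m r s p : ℝ}

lemma radialHamiltonian_strictAnti (hr : 0 < r) (hrm : r < m) :
    StrictAnti (radialHamiltonian m r) := by
  intro p q hpq
  have slope_gt_one : 1 < m / r := (one_lt_div hr).2 hrm
  have abs_diff : |p| - |q| ≤ q - p := by
    simpa only [abs_sub_comm p q, abs_of_pos (sub_pos.2 hpq)] using abs_sub_abs_le_abs_sub p q
  have linear_diff : q - p < m / r * (q - p) := lt_mul_of_one_lt_left (sub_pos.2 hpq) slope_gt_one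
  unfold radialHamiltonian
  linarith

lemma abs_mul_add_abs_mul (hr : 0 ≤ r) (hrm : r ≤ m) : |m * s + |s| * r| = m * |s| + s * r := by
  obtain hs | hs := le_total 0 s
  · rw [abs_of_nonneg hs, abs_of_nonneg (by nlinarith)]
  · rw [abs_of_nonpos hs, abs_of_nonpos (by nlinarith)]
    ring

lemma radialHamiltonian_radialSlope (hr : 0 < r) (hrm : r < m) :
    radialHamiltonian m r (radialSlope m r s) = s := by
  have denom_pos : 0 < m ^ 2 - r ^ 2 := by nlinarith
  have abs_slope : |radialSlope m r s| = r * (m * |s| + s * r) / (m ^ 2 - r ^ 2) := by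
    rw [radialSlope, abs_div, abs_neg, abs_mul, abs_of_pos hr, abs_of_pos denom_pos,
      abs_mul_add_abs_mul hr.le hrm.le]
  rw [radialHamiltonian, abs_slope, radialSlope]
  field_simp
  ring

lemma radialHamiltonian_le_iff (hr : 0 < r) (hrm : r < m) :
    radialHamiltonian m r p ≤ s ↔ radialSlope m r s ≤ p := by
  conv_lhs => rw [← radialHamiltonian_radialSlope (s := s) hr hrm]
  exact (radialHamiltonian_strictAnti hr hrm).le_iff_ge

lemma le_radialHamiltonian_iff (hr : 0 < r) (hrm : r < m) :
    s ≤ radialHamiltonian m r p ↔ p ≤ radialSlope m r s := by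
  conv_lhs => rw [← radialHamiltonian_radialSlope (s := s) hr hrm]
  exact (radialHamiltonian_strictAnti hr hrm).le_iff_ge

lemma continuousOn_radialSlope {h : ℝ → ℝ} (hh : ContinuousOn h (Ioo 0 m)) :
    ContinuousOn (fun r => radialSlope m r (h r)) (Ioo 0 m) := by
  unfold radialSlope
  refine ContinuousOn.div (by fun_prop) (by fun_prop) fun r hr => ?_
  have : 0 < m ^ 2 - r ^ 2 := by nlinarith [hr.1, hr.2]
  exact this.ne'

end Hamiltonian

section Solutions

variable {n : ℕ} {h ψ : ℝ → ℝ} {I J : Set ℝ} {a b : ℝ}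

lemma ViscSolE.mono (hψ : ViscSolE n h J ψ) (hIJ : I ⊆ J) : ViscSolE n h I ψ :=
  ⟨fun φ hφ r hr => hψ.1 φ hφ r (hIJ hr), fun φ hφ r hr => hψ.2 φ hφ r (hIJ hr)⟩

lemma ViscSubsolE.hasViscDerivGE (hψ : ViscSubsolE n h I ψ) (hI : I ⊆ Ioo 0 ((n : ℝ) - 1)) :
    HasViscDerivGE ψ (fun r => radialSlope ((n : ℝ) - 1) r (h r)) I := fun φ hφ r hr hmax =>
  (radialHamiltonian_le_iff (hI hr).1 (hI hr).2).1 (hψ φ hφ.differentiableOn r hr hmax)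

lemma ViscSupersolE.hasViscDerivGE_neg (hψ : ViscSupersolE n h I ψ)
    (hI : I ⊆ Ioo 0 ((n : ℝ) - 1)) :
    HasViscDerivGE (fun r => -ψ r) (fun r => -radialSlope ((n : ℝ) - 1) r (h r)) I := by
  intro φ hφ r hr hmax
  have hmin : IsLocalMin (fun x => ψ x - -φ x) r := by
    simpa only [neg_sub, sub_neg_eq_add, add_comm] using hmax.neg
  have := (le_radialHamiltonian_iff (hI hr).1 (hI hr).2).1
    (hψ (fun x => -φ x) hφ.neg.differentiableOn r hr hmin)
  rw [deriv.fun_neg] at this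
  linarith

lemma ViscSolE.integral_radialSlope_eq_sub (hh : ContinuousOn h (Ioo 0 ((n : ℝ) - 1)))
    (hcont : ContinuousOn ψ (Ioo 0 ((n : ℝ) - 1))) (hψ : ViscSolE n h (Ioo 0 ((n : ℝ) - 1)) ψ)
    (ha : a ∈ Ioo 0 ((n : ℝ) - 1)) (hb : b ∈ Ioo 0 ((n : ℝ) - 1)) :
    ∫ r in a..b, radialSlope ((n : ℝ) - 1) r (h r) = ψ b - ψ a := by
  wlog hab : a ≤ b generalizing a b
  · rw [intervalIntegral.integral_symm, this hb ha (le_of_not_ge hab), neg_sub]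
  have hIcc : Icc a b ⊆ Ioo 0 ((n : ℝ) - 1) := ordConnected_Ioo.out ha hb
  have hIoo : Ioo a b ⊆ Ioo 0 ((n : ℝ) - 1) := Ioo_subset_Icc_self.trans hIcc
  have hslope := (continuousOn_radialSlope hh).mono hIcc
  have lower := ((hψ.mono hIoo).1.hasViscDerivGE hIoo).integral_le_sub hab (hcont.mono hIcc) hslope
  have upper := ((hψ.mono hIoo).2.hasViscDerivGE_neg hIoo).integral_le_sub hab
    (hcont.mono hIcc).neg hslope.neg
  rw [intervalIntegral.integral_neg] at upper
  linarith

end Solutions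

theorem stmt_4_general {n : ℕ} (hn : 2 ≤ n) {h ψ₁ ψ₂ : ℝ → ℝ}
    (hh : ContinuousOn h (Ioo 0 ((n : ℝ) - 1)))
    (hψ₁cont : ContinuousOn ψ₁ (Icc 0 ((n : ℝ) - 1)))
    (hψ₂cont : ContinuousOn ψ₂ (Icc 0 ((n : ℝ) - 1)))
    (hψ₁ : ViscSolE n h (Ioo 0 ((n : ℝ) - 1)) ψ₁)
    (hψ₂ : ViscSolE n h (Ioo 0 ((n : ℝ) - 1)) ψ₂) :
    ∃ C : ℝ, ∀ r ∈ Icc (0 : ℝ) ((n : ℝ) - 1), ψ₁ r = ψ₂ r + C := by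
  have hpos : (0 : ℝ) < (n : ℝ) - 1 := sub_pos.2 (by exact_mod_cast hn)
  obtain ⟨a, ha⟩ : (Ioo 0 ((n : ℝ) - 1)).Nonempty := nonempty_Ioo.2 hpos
  have interior : EqOn ψ₁ (fun r => ψ₂ r + (ψ₁ a - ψ₂ a)) (Ioo 0 ((n : ℝ) - 1)) := by
    intro r hr
    have h₁ := hψ₁.integral_radialSlope_eq_sub hh (hψ₁cont.mono Ioo_subset_Icc_self) ha hr
    have h₂ := hψ₂.integral_radialSlope_eq_sub hh (hψ₂cont.mono Ioo_subset_Icc_self) ha hr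
    dsimp only
    linarith
  exact ⟨ψ₁ a - ψ₂ a, interior.of_subset_closure hψ₁cont (hψ₂cont.add continuousOn_const)
    Ioo_subset_Icc_self (closure_Ioo hpos.ne).ge⟩

/-- Two continuous viscosity solutions of (E) on `(0,∞)` differ by a
constant on `[0, n-1]`. -/
theorem stmt_4 (n : ℕ) (hn : 2 ≤ n) (ftilde : ℝ → ℝ)
    (hfC1 : ContDiffOn ℝ 1 ftilde (Set.Ici 0))
    (hfnonneg : ∀ r ∈ Set.Ici (0 : ℝ), 0 ≤ ftilde r)
    (hfsupp : ∃ R : ℝ, 0 < R ∧ ∀ r ≥ R, ftilde r = 0)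
    (c : ℝ) (hc : IsGreatest (ftilde '' Set.Ici ((n : ℝ) - 1)) c)
    (ψ₁ ψ₂ : ℝ → ℝ)
    (hψ₁cont : ContinuousOn ψ₁ (Set.Ici 0)) (hψ₂cont : ContinuousOn ψ₂ (Set.Ici 0))
    (hψ₁ : ViscSolE n (fun r => ftilde r - c) (Set.Ioi 0) ψ₁)
    (hψ₂ : ViscSolE n (fun r => ftilde r - c) (Set.Ioi 0) ψ₂) :
    ∃ C : ℝ, ∀ r ∈ Set.Icc (0 : ℝ) ((n : ℝ) - 1), ψ₁ r = ψ₂ r + C :=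
  stmt_4_general hn ((hfC1.continuousOn.sub continuousOn_const).mono fun _ hr => hr.1.le)
    (hψ₁cont.mono Icc_subset_Ici_self) (hψ₂cont.mono Icc_subset_Ici_self)
    (hψ₁.mono Ioo_subset_Ioi_self) (hψ₂.mono Ioo_subset_Ioi_self)
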